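/- Edge trace identity for the linearized Cotton–York operator: for every C^∞ matrix field τ : ℝ³ → ℝ^{3×3} with symmetric values and every choice of pairwise orthogonal unit vectors t, m, n ∈ ℝ³ with t' := n × m, the identity mᵀ (tr3cott(τ)) t' = tre3(τ) + (1/2) ∂_t ∂_t ( nᵀ τ n + 2 t'ᵀ (tr1cott(τ)) m ) − ∂_{t'}( ∂_m ( tᵀ (tr1cott(τ)) t ) ) holds at every point of ℝ³. -/

import Mathlib

noncomputable section

open Matrix

/-- Vectors in ℝ³. -/
abbrev V3 := Fin 3 → ℝ
/-- 3×3 real matrices. -/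
abbrev M3 := Matrix (Fin 3) (Fin 3) ℝ

/-- Partial derivative ∂ᵢ of a scalar field. -/
def pd (i : Fin 3) (f : V3 → ℝ) : V3 → ℝ :=
  fun x => fderiv ℝ f x (Pi.single i 1)

/-- Gradient matrix of a vector field: (grad v)_{ij} = ∂ⱼ vᵢ. -/
def vgrad (v : V3 → V3) : V3 → M3 :=
  fun x => Matrix.of fun i j => pd j (fun y => v y i) x

/-- Divergence of a vector field. -/
def vdiv (v : V3 → V3) : V3 → ℝ :=
  fun x => ∑ i, pd i (fun y => v y i) x

/-- Cross product on ℝ³. -/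
def cross (a b : V3) : V3 :=
  fun i => a (i + 1) * b (i + 2) - a (i + 2) * b (i + 1)

/-- Curl of a vector field. -/
def vcurl (v : V3 → V3) : V3 → V3 :=
  fun x i => pd (i + 1) (fun y => v y (i + 2)) x - pd (i + 2) (fun y => v y (i + 1)) x

/-- Row-wise curl of a matrix field. -/
def mcurl (τ : V3 → M3) : V3 → M3 :=
  fun x => Matrix.of fun i j =>
    pd (j + 1) (fun y => τ y i (j + 2)) x - pd (j + 2) (fun y => τ y i (j + 1)) x

/-- Row-wise divergence of a matrix field. -/
def mdiv (τ : V3 → M3) : V3 → V3 :=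
  fun x i => ∑ j, pd j (fun y => τ y i j) x

/-- Symmetric part of a matrix. -/
def msym (A : M3) : M3 := (1 / 2 : ℝ) • (A + Aᵀ)

/-- Deviatoric (trace-free) part of a matrix. -/
def devm (A : M3) : M3 := A - ((1 / 3 : ℝ) * A.trace) • (1 : M3)

/-- The skew-symmetric matrix associated to a vector: mskw(ω) y = ω × y. -/
def mskw (w : V3) : M3 := !![0, -w 2, w 1; w 2, 0, -w 0; -w 1, w 0, 0]

/-- vskw(A) := mskw⁻¹(skw A). -/
def vskw (A : M3) : V3 :=
  (1 / 2 : ℝ) • ![A 2 1 - A 1 2, A 0 2 - A 2 0, A 1 0 - A 0 1]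

/-- S⁻¹(A) := Aᵀ − (1/2)(tr A)I. -/
def Sinv (A : M3) : M3 := Aᵀ - ((1 / 2 : ℝ) * A.trace) • (1 : M3)

/-- S(A) := Aᵀ − (tr A)I. -/
def Sop (A : M3) : M3 := Aᵀ - A.trace • (1 : M3)

/-- Incompatibility operator inc τ := curl (S⁻¹ (curl τ)). -/
def inc (τ : V3 → M3) : V3 → M3 := mcurl fun x => Sinv (mcurl τ x)

/-- Linearized Cotton–York operator cott τ := curl (S⁻¹ (inc τ)). -/
def cott (τ : V3 → M3) : V3 → M3 := mcurl fun x => Sinv (inc τ x)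

/-- Hessian matrix of a scalar field. -/
def hess (u : V3 → ℝ) : V3 → M3 :=
  fun x => Matrix.of fun i j => pd i (pd j u) x

/-- Euclidean dot product on ℝ³. -/
def dotp (a b : V3) : ℝ := ∑ i, a i * b i

/-- Smoothness of a vector field (componentwise C^∞). -/
def SmoothV (v : V3 → V3) : Prop := ∀ i, ContDiff ℝ (⊤ : ℕ∞) fun x => v x i

/-- Smoothness of a matrix field (entrywise C^∞). -/
def SmoothM (τ : V3 → M3) : Prop := ∀ i j, ContDiff ℝ (⊤ : ℕ∞) fun x => τ x i j

/-- Conformal Killing fields. -/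
def CK (v : V3 → V3) : Prop :=
  ∃ (a c d : V3) (b : ℝ), ∀ x,
    v x = dotp x x • a - (2 * dotp a x) • x + b • x + cross c x + d

/-- Rigid motions. -/
def RM (v : V3 → V3) : Prop := ∃ a b : V3, ∀ x, v x = cross a x + b

/-- Lowest-order Raviart–Thomas fields. -/
def RT (v : V3 → V3) : Prop := ∃ (a : V3) (b : ℝ), ∀ x, v x = a + b • x

/-- Polynomial scalar functions of total degree at most k. -/
def PolyLe (k : ℕ) (f : V3 → ℝ) : Prop :=
  ∃ p : MvPolynomial (Fin 3) ℝ, p.totalDegree ≤ k ∧ ∀ x, f x = MvPolynomial.eval x p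

/-- Matrix fields with entries in P_k and values symmetric traceless. -/
def PolyLeST (k : ℕ) (τ : V3 → M3) : Prop :=
  (∀ i j, PolyLe k fun x => τ x i j) ∧ (∀ x, (τ x)ᵀ = τ x) ∧ ∀ x, (τ x).trace = 0


/-- Directional derivative of a scalar field along a fixed vector w. -/
def pdir (w : V3) (f : V3 → ℝ) : V3 → ℝ := fun x => fderiv ℝ f x w

/-- Entrywise directional derivative of a vector field. -/
def pdirV (w : V3) (v : V3 → V3) : V3 → V3 := fun x i => pdir w (fun y => v y i) x

/-- Entrywise directional derivative of a matrix field. -/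
def pdirM (w : V3) (A : V3 → M3) : V3 → M3 :=
  fun x => Matrix.of fun i j => pdir w (fun y => A y i j) x

/-- Column-wise curl ∇ × A: the j-th column is the curl of the j-th column of A. -/
def colcurl (A : V3 → M3) : V3 → M3 :=
  fun x => Matrix.of fun i j =>
    pd (i + 1) (fun y => A y (i + 2) j) x - pd (i + 2) (fun y => A y (i + 1) j) x

/-- Gradient of a scalar field as a vector field. -/
def gradS (f : V3 → ℝ) : V3 → V3 := fun x i => pd i f x

/-- Projection matrix Π := I − n nᵀ. -/
def Pm (n : V3) : M3 := 1 - Matrix.vecMulVec n n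

/-- Row-wise cross product of a matrix with a vector. -/
def mcrossv (A : M3) (w : V3) : M3 := Matrix.of fun i => cross (A i) w

/-- Surface gradient grad_f w := (grad w) Π. -/
def gradf (n : V3) (w : V3 → V3) : V3 → M3 := fun x => vgrad w x * Pm n

/-- Surface deformation def_f w := sym (grad_f w). -/
def deff (n : V3) (w : V3 → V3) : V3 → M3 := fun x => msym (gradf n w x)

/-- Surface divergence of a matrix field: div_f A := (∂_t A) t + (∂_m A) m. -/
def divfM (t m : V3) (A : V3 → M3) : V3 → V3 :=
  fun x => (pdirM t A x).mulVec t + (pdirM m A x).mulVec m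

/-- Surface divergence of a vector field: div_f w := t·∂_t w + m·∂_m w. -/
def divfV (t m : V3) (w : V3 → V3) : V3 → ℝ :=
  fun x => dotp t (pdirV t w x) + dotp m (pdirV m w x)

/-- Surface deviatoric part dev_f A := ΠAΠ − (1/2) tr(ΠAΠ) Π. -/
def devf (n : V3) (A : M3) : M3 :=
  Pm n * A * Pm n - ((1 / 2 : ℝ) * (Pm n * A * Pm n).trace) • Pm n

/-- tr2inc(τ) := 2 def_f(Πτn) − Π(∂_n τ)Π. -/
def tr2inc (n : V3) (τ : V3 → M3) : V3 → M3 :=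
  fun x => (2 : ℝ) • deff n (fun y => (Pm n * τ y).mulVec n) x - Pm n * pdirM n τ x * Pm n

/-- tr1cott(τ) := sym((Πτ) × n). -/
def tr1cott (n : V3) (τ : V3 → M3) : V3 → M3 :=
  fun x => msym (mcrossv (Pm n * τ x) n)

/-- tr2cott(τ) := sym(tr2inc(τ) × n). -/
def tr2cott (n : V3) (τ : V3 → M3) : V3 → M3 :=
  fun x => msym (mcrossv (tr2inc n τ x) n)

/-- tr3cott(τ) := dev_f(tr2inc(sym curl τ)). -/
def tr3cott (n : V3) (τ : V3 → M3) : V3 → M3 :=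
  fun x => devf n (tr2inc n (fun y => msym (mcurl τ y)) x)

/-- tre2(τ) := 2(∂_t(sym curl τ))t − ∇(tᵀ(curl τ)t). -/
def tre2 (t : V3) (τ : V3 → M3) : V3 → V3 :=
  fun x => (2 : ℝ) • (pdirM t (fun y => msym (mcurl τ y)) x).mulVec t
    - gradS (fun y => dotp t ((mcurl τ y).mulVec t)) x

/-- tre3(τ) := −tᵀ(∇ × (sym curl τ))t − (1/2)∂_t(t·div τ). -/
def tre3 (t : V3) (τ : V3 → M3) : V3 → ℝ :=
  fun x => -dotp t ((colcurl (fun y => msym (mcurl τ y)) x).mulVec t)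
    - (1 / 2 : ℝ) * pdir t (fun y => dotp t (mdiv τ y)) x

/-! Up to sign, `t` is `n × m`, and both sides are even in `t`, so take `t = n × m`. Then the
`(m, t)` entry of `tr3cott τ` is `-tᵀ(∇ × sym curl τ)t` plus `∂ₜ` of `mᵀ(sym curl τ)n`.
Writing `curl` and `div` in the frame `(t, m, n)` shows that `2 mᵀ(sym curl τ)n + t · div τ` is the
first-order expression `∂ₜ(nᵀτn + tᵀτt - mᵀτm) + 2 ∂ₘ(tᵀτm)`, and `tᵀτt - mᵀτm` and `-tᵀτm`
are `2 tᵀ(tr1cott τ)m` and `tᵀ(tr1cott τ)t`. Applying `∂ₜ / 2` gives the identity; no mixed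
partial derivatives are interchanged. -/

lemma dotp_eq_dotProduct (a b : V3) : dotp a b = a ⬝ᵥ b := rfl

lemma cross_eq_crossProduct (a b : V3) : cross a b = a ⨯₃ b := by
  ext i
  fin_cases i <;> simp [cross, cross_apply]

section Frame

lemma cross_dot_self_left (a b : V3) : (a ⨯₃ b) ⬝ᵥ a = 0 := by
  rw [dotProduct_comm, dot_self_cross]

variable {m n : V3}

lemma cross_dot_cross_self_eq_one (hm : m ⬝ᵥ m = 1) (hn : n ⬝ᵥ n = 1) (hmn : m ⬝ᵥ n = 0) :
    (n ⨯₃ m) ⬝ᵥ (n ⨯₃ m) = 1 := by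
  rw [cross_dot_cross, hm, hn, hmn, dotProduct_comm n m, hmn]
  norm_num

lemma cross_cross_eq_right (hm : m ⬝ᵥ m = 1) (hmn : m ⬝ᵥ n = 0) : m ⨯₃ (n ⨯₃ m) = n := by
  rw [cross_cross_eq_smul_sub_smul', hm, dotProduct_comm n m, hmn, one_smul, zero_smul, sub_zero]

lemma cross_cross_eq_left (hn : n ⬝ᵥ n = 1) (hmn : m ⬝ᵥ n = 0) : n ⨯₃ m ⨯₃ n = m := by
  rw [cross_cross_eq_smul_sub_smul, hn, hmn, one_smul, zero_smul, sub_zero]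

lemma cross_cross_eq_neg (hn : n ⬝ᵥ n = 1) (hmn : m ⬝ᵥ n = 0) : n ⨯₃ (n ⨯₃ m) = -m := by
  rw [← cross_anticomm, cross_cross_eq_left hn hmn]

lemma vecMulVec_cross_add_vecMulVec_add_vecMulVec (hm : m ⬝ᵥ m = 1) (hn : n ⬝ᵥ n = 1)
    (hmn : m ⬝ᵥ n = 0) :
    vecMulVec (n ⨯₃ m) (n ⨯₃ m) + vecMulVec m m + vecMulVec n n = 1 := by
  let Q : M3 := Matrix.of ![n ⨯₃ m, m, n]
  have hQ : Q * Qᵀ = 1 := by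
    have hnm : n ⬝ᵥ m = 0 := by rw [dotProduct_comm, hmn]
    ext i j
    change ![n ⨯₃ m, m, n] i ⬝ᵥ ![n ⨯₃ m, m, n] j = _
    fin_cases i <;> fin_cases j <;>
      simp [hm, hn, hmn, hnm, cross_dot_cross_self_eq_one hm hn hmn, dotProduct_comm (n ⨯₃ m)]
  rw [← mul_eq_one_comm.mp hQ]
  ext i j
  simp [Q, vecMulVec_apply, Matrix.mul_apply, Fin.sum_univ_three]

lemma eq_cross_or_eq_neg_cross {t : V3} (ht : t ⬝ᵥ t = 1) (hm : m ⬝ᵥ m = 1) (hn : n ⬝ᵥ n = 1)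
    (htm : t ⬝ᵥ m = 0) (htn : t ⬝ᵥ n = 0) (hmn : m ⬝ᵥ n = 0) :
    t = n ⨯₃ m ∨ t = -(n ⨯₃ m) := by
  have h_par : t = (t ⬝ᵥ (n ⨯₃ m)) • (n ⨯₃ m) := by
    calc t = t ᵥ* (vecMulVec (n ⨯₃ m) (n ⨯₃ m) + vecMulVec m m + vecMulVec n n) := by
          rw [vecMulVec_cross_add_vecMulVec_add_vecMulVec hm hn hmn, vecMul_one]
      _ = (t ⬝ᵥ (n ⨯₃ m)) • (n ⨯₃ m) := by
          simp only [vecMul_add, vecMul_vecMulVec, htm, htn, zero_smul, add_zero]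
  have h_sq : (t ⬝ᵥ (n ⨯₃ m)) * (t ⬝ᵥ (n ⨯₃ m)) = 1 := by
    rw [← ht]
    conv_rhs => rw [h_par]
    rw [smul_dotProduct, dotProduct_comm (n ⨯₃ m), ← h_par, smul_eq_mul]
  rcases mul_self_eq_one_iff.mp h_sq with h | h
  · left; rwa [h, one_smul] at h_par
  · right; rwa [h, neg_one_smul] at h_par

end Frame

section Algebra

variable {a b n : V3}

lemma dotProduct_mulVec_comm_of_isSymm {A : M3} (hA : A.IsSymm) (a b : V3) :
    a ⬝ᵥ A *ᵥ b = b ⬝ᵥ A *ᵥ a := by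
  rw [← dotProduct_transpose_mulVec, hA.eq]

lemma msym_isSymm (A : M3) : (msym A).IsSymm := by
  simp [IsSymm, msym, add_comm]

lemma dotProduct_msym_mulVec (A : M3) (a b : V3) :
    a ⬝ᵥ msym A *ᵥ b = 1 / 2 * (a ⬝ᵥ A *ᵥ b + b ⬝ᵥ A *ᵥ a) := by
  rw [msym, smul_mulVec, add_mulVec, dotProduct_smul, dotProduct_add,
    dotProduct_transpose_mulVec, smul_eq_mul]

lemma mcrossv_mulVec (A : M3) (w b : V3) : mcrossv A w *ᵥ b = A *ᵥ (w ⨯₃ b) := by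
  ext i
  change cross (A i) w ⬝ᵥ b = A i ⬝ᵥ (w ⨯₃ b)
  rw [cross_eq_crossProduct, dotProduct_comm, triple_product_permutation]

lemma Pm_mulVec_of_dotProduct_eq_zero (hb : b ⬝ᵥ n = 0) : Pm n *ᵥ b = b := by
  rw [Pm, sub_mulVec, one_mulVec, vecMulVec_mulVec, dotProduct_comm, hb, MulOpposite.op_zero,
    zero_smul, sub_zero]

lemma vecMul_Pm_of_dotProduct_eq_zero (ha : a ⬝ᵥ n = 0) : a ᵥ* Pm n = a := by
  rw [Pm, vecMul_sub, vecMul_one, vecMul_vecMulVec, ha, zero_smul, sub_zero]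

lemma dotProduct_Pm_mul_mulVec (ha : a ⬝ᵥ n = 0) (A : M3) (b : V3) :
    a ⬝ᵥ (Pm n * A) *ᵥ b = a ⬝ᵥ A *ᵥ b := by
  rw [← mulVec_mulVec, dotProduct_mulVec, vecMul_Pm_of_dotProduct_eq_zero ha]

lemma dotProduct_devf_mulVec (ha : a ⬝ᵥ n = 0) (hb : b ⬝ᵥ n = 0) (hab : a ⬝ᵥ b = 0) (A : M3) :
    a ⬝ᵥ devf n A *ᵥ b = a ⬝ᵥ A *ᵥ b := by
  rw [devf, sub_mulVec, smul_mulVec, dotProduct_sub, dotProduct_smul, ← mulVec_mulVec,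
    Pm_mulVec_of_dotProduct_eq_zero hb, dotProduct_Pm_mul_mulVec ha, hab, smul_zero, sub_zero]

lemma dotProduct_tr1cott_mulVec (ha : a ⬝ᵥ n = 0) (hb : b ⬝ᵥ n = 0) (τ : V3 → M3) (x : V3) :
    a ⬝ᵥ tr1cott n τ x *ᵥ b = 1 / 2 * (a ⬝ᵥ τ x *ᵥ (n ⨯₃ b) + b ⬝ᵥ τ x *ᵥ (n ⨯₃ a)) := by
  rw [tr1cott, dotProduct_msym_mulVec, mcrossv_mulVec, mcrossv_mulVec,
    dotProduct_Pm_mul_mulVec ha, dotProduct_Pm_mul_mulVec hb]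

end Algebra

section Derivatives

/-- Entrywise differentiability of a matrix field at a point, in the style of `SmoothM`: `Matrix`
carries no canonical norm. -/
def DifferentiableMAt (A : V3 → M3) (x : V3) : Prop :=
  ∀ i j, DifferentiableAt ℝ (fun y => A y i j) x

variable {A : V3 → M3} {x : V3}

lemma SmoothM.differentiableMAt (hA : SmoothM A) (x : V3) : DifferentiableMAt A x :=
  fun i j => (hA i j).differentiable (by simp) x

lemma SmoothM.pdirM (hA : SmoothM A) (w : V3) : SmoothM (pdirM w A) := fun i j =>
  ((hA i j).fderiv_right (m := (⊤ : ℕ∞)) (by simp)).clm_apply contDiff_const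

lemma DifferentiableMAt.msym (hA : DifferentiableMAt A x) :
    DifferentiableMAt (fun y => msym (A y)) x :=
  fun i j => ((hA i j).add (hA j i)).const_mul _

lemma differentiableMAt_mcurl (hA : ∀ w, DifferentiableMAt (pdirM w A) x) :
    DifferentiableMAt (mcurl A) x :=
  fun i j => (hA (Pi.single (j + 1) 1) i (j + 2)).sub (hA (Pi.single (j + 2) 1) i (j + 1))

lemma DifferentiableMAt.dotProduct_mulVec (hA : DifferentiableMAt A x) (a b : V3) :
    DifferentiableAt ℝ (fun y => a ⬝ᵥ A y *ᵥ b) x := by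
  simp only [mulVec, dotProduct]
  exact DifferentiableAt.fun_sum fun i _ =>
    (DifferentiableAt.fun_sum fun j _ => (hA i j).mul_const (b j)).const_mul (a i)

lemma differentiableAt_dotProduct_mdiv (hA : ∀ w, DifferentiableMAt (pdirM w A) x) (a : V3) :
    DifferentiableAt ℝ (fun y => a ⬝ᵥ mdiv A y) x :=
  DifferentiableAt.fun_sum fun i _ =>
    (DifferentiableAt.fun_sum fun j _ => hA (Pi.single j 1) i j).const_mul _

lemma pdir_eq_sum_pd (w : V3) (f : V3 → ℝ) (x : V3) : pdir w f x = ∑ k, w k * pd k f x := by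
  unfold pdir pd
  conv_lhs => rw [pi_eq_sum_univ' w]
  simp only [map_sum, map_smul, smul_eq_mul]

lemma pdir_neg_left (w : V3) (f : V3 → ℝ) : pdir (-w) f = fun x => -pdir w f x :=
  funext fun _ => map_neg _ _

lemma pdir_neg_right (w : V3) (f : V3 → ℝ) :
    pdir w (fun y => -f y) = fun x => -pdir w f x := by
  ext x
  simp only [pdir, fderiv_fun_neg, _root_.neg_apply]

lemma pdir_add {f g : V3 → ℝ} (hf : DifferentiableAt ℝ f x) (hg : DifferentiableAt ℝ g x)
    (w : V3) : pdir w (fun y => f y + g y) x = pdir w f x + pdir w g x := by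
  simp only [pdir, fderiv_fun_add hf hg, _root_.add_apply]

lemma pdir_sub {f g : V3 → ℝ} (hf : DifferentiableAt ℝ f x) (hg : DifferentiableAt ℝ g x)
    (w : V3) : pdir w (fun y => f y - g y) x = pdir w f x - pdir w g x := by
  simp only [pdir, fderiv_fun_sub hf hg, _root_.sub_apply]

lemma pdir_const_mul {f : V3 → ℝ} (hf : DifferentiableAt ℝ f x) (c : ℝ) (w : V3) :
    pdir w (fun y => c * f y) x = c * pdir w f x := by
  simp only [pdir, fderiv_const_mul hf, _root_.smul_apply, smul_eq_mul]

lemma pdir_dotProduct_mulVec (hA : DifferentiableMAt A x) (w a b : V3) :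
    pdir w (fun y => a ⬝ᵥ A y *ᵥ b) x = a ⬝ᵥ pdirM w A x *ᵥ b := by
  have h_deriv : HasFDerivAt (fun y => a ⬝ᵥ A y *ᵥ b)
      (∑ i, a i • ∑ j, b j • fderiv ℝ (fun y => A y i j) x) x := by
    simp only [mulVec, dotProduct]
    exact HasFDerivAt.fun_sum fun i _ =>
      (HasFDerivAt.fun_sum fun j _ => (hA i j).hasFDerivAt.mul_const (b j)).const_mul (a i)
  rw [pdir, h_deriv.fderiv]
  simp [dotProduct, mulVec, pdirM, pdir, mul_comm]

lemma pdirM_isSymm (hA : ∀ y, (A y).IsSymm) (w x : V3) : (pdirM w A x).IsSymm := by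
  ext i j
  simp only [pdirM, transpose_apply, of_apply, fun y => (hA y).apply i j]

lemma vgrad_mulVec (v : V3 → V3) (x b : V3) : vgrad v x *ᵥ b = pdirV b v x := by
  ext i
  simp only [vgrad, pdirV, pdir_eq_sum_pd, mulVec, dotProduct, of_apply, mul_comm]

lemma pdirV_mul_mulVec (hA : DifferentiableMAt A x) (P : M3) (w b : V3) :
    pdirV w (fun y => (P * A y) *ᵥ b) x = (P * pdirM w A x) *ᵥ b := by
  ext i
  simp only [pdirV, ← mulVec_mulVec]
  exact pdir_dotProduct_mulVec hA w (P i) b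

lemma mcurl_mulVec_cross (A : V3 → M3) (x c d : V3) :
    mcurl A x *ᵥ (c ⨯₃ d) = pdirM c A x *ᵥ d - pdirM d A x *ᵥ c := by
  ext i
  simp only [mcurl, pdirM, pdir_eq_sum_pd, cross_apply, mulVec, dotProduct, of_apply,
    Pi.sub_apply, Fin.sum_univ_three, cons_val, Fin.isValue, Fin.reduceAdd, zero_add]
  ring

lemma colcurl_eq_transpose_mcurl (hA : ∀ y, (A y).IsSymm) (x : V3) :
    colcurl A x = (mcurl A x)ᵀ := by
  ext i j
  simp only [colcurl, mcurl, transpose_apply, of_apply, fun y k => (hA y).apply j k]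

lemma pdirM_mulVec_apply (A : V3 → M3) (x w b : V3) (i : Fin 3) :
    (pdirM w A x *ᵥ b) i = ∑ k, ∑ j, vecMulVec w b k j * pd k (fun y => A y i j) x := by
  simp only [mulVec, dotProduct, pdirM, of_apply, pdir_eq_sum_pd, Finset.sum_mul, vecMulVec_apply]
  rw [Finset.sum_comm]
  simp only [mul_right_comm]

lemma mdiv_eq_of_vecMulVec_add_eq_one (A : V3 → M3) (x : V3) {p m n : V3}
    (h : vecMulVec p p + vecMulVec m m + vecMulVec n n = 1) :
    mdiv A x = pdirM p A x *ᵥ p + pdirM m A x *ᵥ m + pdirM n A x *ᵥ n := by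
  ext i
  calc mdiv A x i = ∑ k, ∑ j, (1 : M3) k j * pd k (fun y => A y i j) x := by
        simp [mdiv, one_apply]
    _ = _ := by
        simp only [← h, Pi.add_apply, pdirM_mulVec_apply, Matrix.add_apply, add_mul,
          Finset.sum_add_distrib]

end Derivatives

section Traces

variable {τ : V3 → M3} {x m n : V3}

lemma dotProduct_gradf_mulVec {A : V3 → M3} (hA : DifferentiableMAt A x) {a b : V3}
    (ha : a ⬝ᵥ n = 0) (hb : b ⬝ᵥ n = 0) :
    a ⬝ᵥ gradf n (fun y => (Pm n * A y) *ᵥ n) x *ᵥ b = a ⬝ᵥ pdirM b A x *ᵥ n := by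
  rw [gradf, ← mulVec_mulVec, Pm_mulVec_of_dotProduct_eq_zero hb, vgrad_mulVec,
    pdirV_mul_mulVec hA, dotProduct_Pm_mul_mulVec ha]

lemma dotProduct_tr2inc_mulVec {A : V3 → M3} (hA : DifferentiableMAt A x) {a b : V3}
    (ha : a ⬝ᵥ n = 0) (hb : b ⬝ᵥ n = 0) :
    a ⬝ᵥ tr2inc n A x *ᵥ b =
      a ⬝ᵥ pdirM b A x *ᵥ n + b ⬝ᵥ pdirM a A x *ᵥ n - a ⬝ᵥ pdirM n A x *ᵥ b := by
  rw [tr2inc, sub_mulVec, smul_mulVec, dotProduct_sub, dotProduct_smul, deff,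
    dotProduct_msym_mulVec, dotProduct_gradf_mulVec hA ha hb, dotProduct_gradf_mulVec hA hb ha,
    ← mulVec_mulVec, Pm_mulVec_of_dotProduct_eq_zero hb, dotProduct_Pm_mul_mulVec ha, smul_eq_mul]
  ring

lemma dotProduct_tr2inc_mulVec_cross {A : V3 → M3} (hA : DifferentiableMAt A x)
    (hsym : ∀ y, (A y).IsSymm) (hmn : m ⬝ᵥ n = 0) :
    m ⬝ᵥ tr2inc n A x *ᵥ (n ⨯₃ m) =
      m ⬝ᵥ pdirM (n ⨯₃ m) A x *ᵥ n - (n ⨯₃ m) ⬝ᵥ colcurl A x *ᵥ (n ⨯₃ m) := by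
  rw [dotProduct_tr2inc_mulVec hA hmn (cross_dot_self_left n m),
    colcurl_eq_transpose_mcurl hsym, dotProduct_transpose_mulVec, mcurl_mulVec_cross,
    dotProduct_sub, dotProduct_mulVec_comm_of_isSymm (pdirM_isSymm hsym n x) (n ⨯₃ m)]
  ring

lemma two_mul_dotProduct_msym_mcurl_add_mdiv (hsym : ∀ y, (τ y).IsSymm) (hm : m ⬝ᵥ m = 1)
    (hn : n ⬝ᵥ n = 1) (hmn : m ⬝ᵥ n = 0) :
    2 * (m ⬝ᵥ msym (mcurl τ x) *ᵥ n) + (n ⨯₃ m) ⬝ᵥ mdiv τ x =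
      n ⬝ᵥ pdirM (n ⨯₃ m) τ x *ᵥ n + (n ⨯₃ m) ⬝ᵥ pdirM (n ⨯₃ m) τ x *ᵥ (n ⨯₃ m)
        - m ⬝ᵥ pdirM (n ⨯₃ m) τ x *ᵥ m + 2 * ((n ⨯₃ m) ⬝ᵥ pdirM m τ x *ᵥ m) := by
  have h_curl_n : mcurl τ x *ᵥ n = pdirM m τ x *ᵥ (n ⨯₃ m) - pdirM (n ⨯₃ m) τ x *ᵥ m := by
    rw [← mcurl_mulVec_cross, cross_cross_eq_right hm hmn]
  have h_curl_m : mcurl τ x *ᵥ m = pdirM (n ⨯₃ m) τ x *ᵥ n - pdirM n τ x *ᵥ (n ⨯₃ m) := by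
    rw [← mcurl_mulVec_cross, cross_cross_eq_left hn hmn]
  have h_swap (w a b : V3) := dotProduct_mulVec_comm_of_isSymm (pdirM_isSymm hsym w x) a b
  rw [dotProduct_msym_mulVec, h_curl_n, h_curl_m,
    mdiv_eq_of_vecMulVec_add_eq_one τ x (vecMulVec_cross_add_vecMulVec_add_vecMulVec hm hn hmn)]
  simp only [dotProduct_sub, dotProduct_add]
  rw [h_swap m m (n ⨯₃ m), h_swap n n (n ⨯₃ m)]
  ring

lemma dotProduct_mulVec_add_two_mul_tr1cott (hn : n ⬝ᵥ n = 1) (hmn : m ⬝ᵥ n = 0)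
    (τ : V3 → M3) (x : V3) :
    n ⬝ᵥ τ x *ᵥ n + 2 * ((n ⨯₃ m) ⬝ᵥ tr1cott n τ x *ᵥ m) =
      n ⬝ᵥ τ x *ᵥ n + (n ⨯₃ m) ⬝ᵥ τ x *ᵥ (n ⨯₃ m) - m ⬝ᵥ τ x *ᵥ m := by
  rw [dotProduct_tr1cott_mulVec (cross_dot_self_left n m) hmn, cross_cross_eq_neg hn hmn,
    mulVec_neg, dotProduct_neg]
  ring

lemma dotProduct_tr1cott_mulVec_cross (hn : n ⬝ᵥ n = 1) (hmn : m ⬝ᵥ n = 0)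
    (τ : V3 → M3) (x : V3) :
    (n ⨯₃ m) ⬝ᵥ tr1cott n τ x *ᵥ (n ⨯₃ m) = -((n ⨯₃ m) ⬝ᵥ τ x *ᵥ m) := by
  have hpn := cross_dot_self_left n m
  rw [dotProduct_tr1cott_mulVec hpn hpn, cross_cross_eq_neg hn hmn, mulVec_neg, dotProduct_neg]
  ring

lemma pdir_dotProduct_mulVec_add_two_mul_tr1cott (hτ : DifferentiableMAt τ x)
    (hn : n ⬝ᵥ n = 1) (hmn : m ⬝ᵥ n = 0) (w : V3) :
    pdir w (fun y => n ⬝ᵥ τ y *ᵥ n + 2 * ((n ⨯₃ m) ⬝ᵥ tr1cott n τ y *ᵥ m)) x =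
      n ⬝ᵥ pdirM w τ x *ᵥ n + (n ⨯₃ m) ⬝ᵥ pdirM w τ x *ᵥ (n ⨯₃ m) - m ⬝ᵥ pdirM w τ x *ᵥ m := by
  have h_diff (a b : V3) := hτ.dotProduct_mulVec a b
  simp only [dotProduct_mulVec_add_two_mul_tr1cott hn hmn]
  rw [pdir_sub ((h_diff _ _).fun_add (h_diff _ _)) (h_diff _ _), pdir_add (h_diff _ _) (h_diff _ _)]
  simp only [pdir_dotProduct_mulVec hτ]

lemma pdir_dotProduct_tr1cott_mulVec_cross (hτ : DifferentiableMAt τ x)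
    (hn : n ⬝ᵥ n = 1) (hmn : m ⬝ᵥ n = 0) (w : V3) :
    pdir w (fun y => (n ⨯₃ m) ⬝ᵥ tr1cott n τ y *ᵥ (n ⨯₃ m)) x =
      -((n ⨯₃ m) ⬝ᵥ pdirM w τ x *ᵥ m) := by
  simp only [dotProduct_tr1cott_mulVec_cross hn hmn, pdir_neg_right, pdir_dotProduct_mulVec hτ]

lemma two_mul_dotProduct_msym_mcurl_add_mdiv_eq_pdir (hτ : DifferentiableMAt τ x)
    (hsym : ∀ y, (τ y).IsSymm) (hm : m ⬝ᵥ m = 1) (hn : n ⬝ᵥ n = 1) (hmn : m ⬝ᵥ n = 0) :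
    2 * (m ⬝ᵥ msym (mcurl τ x) *ᵥ n) + (n ⨯₃ m) ⬝ᵥ mdiv τ x =
      pdir (n ⨯₃ m) (fun y => n ⬝ᵥ τ y *ᵥ n + 2 * ((n ⨯₃ m) ⬝ᵥ tr1cott n τ y *ᵥ m)) x
        - 2 * pdir m (fun y => (n ⨯₃ m) ⬝ᵥ tr1cott n τ y *ᵥ (n ⨯₃ m)) x := by
  rw [two_mul_dotProduct_msym_mcurl_add_mdiv hsym hm hn hmn,
    pdir_dotProduct_mulVec_add_two_mul_tr1cott hτ hn hmn,
    pdir_dotProduct_tr1cott_mulVec_cross hτ hn hmn]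
  ring

lemma two_mul_dotProduct_pdirM_msym_mcurl_add_pdir_mdiv (hτ : ∀ y, DifferentiableMAt τ y)
    (hτ' : ∀ w, DifferentiableMAt (pdirM w τ) x) (hsym : ∀ y, (τ y).IsSymm)
    (hm : m ⬝ᵥ m = 1) (hn : n ⬝ᵥ n = 1) (hmn : m ⬝ᵥ n = 0) (w : V3) :
    2 * (m ⬝ᵥ pdirM w (fun y => msym (mcurl τ y)) x *ᵥ n)
        + pdir w (fun y => (n ⨯₃ m) ⬝ᵥ mdiv τ y) x =
      pdir w (pdir (n ⨯₃ m) fun y =>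
          n ⬝ᵥ τ y *ᵥ n + 2 * ((n ⨯₃ m) ⬝ᵥ tr1cott n τ y *ᵥ m)) x
        - 2 * pdir w (pdir m fun y => (n ⨯₃ m) ⬝ᵥ tr1cott n τ y *ᵥ (n ⨯₃ m)) x := by
  have h_symCurl : DifferentiableMAt (fun y => msym (mcurl τ y)) x :=
    (differentiableMAt_mcurl hτ').msym
  have h_mn := h_symCurl.dotProduct_mulVec m n
  have h_div := differentiableAt_dotProduct_mdiv hτ' (n ⨯₃ m)
  have h_deriv (w a b : V3) := (hτ' w).dotProduct_mulVec a b
  have h_cross : DifferentiableAt ℝ (pdir (n ⨯₃ m) fun y =>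
      n ⬝ᵥ τ y *ᵥ n + 2 * ((n ⨯₃ m) ⬝ᵥ tr1cott n τ y *ᵥ m)) x := by
    rw [funext fun y => pdir_dotProduct_mulVec_add_two_mul_tr1cott (hτ y) hn hmn (n ⨯₃ m)]
    exact ((h_deriv _ _ _).add (h_deriv _ _ _)).sub (h_deriv _ _ _)
  have h_m : DifferentiableAt ℝ
      (pdir m fun y => (n ⨯₃ m) ⬝ᵥ tr1cott n τ y *ᵥ (n ⨯₃ m)) x := by
    rw [funext fun y => pdir_dotProduct_tr1cott_mulVec_cross (hτ y) hn hmn m]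
    exact (h_deriv _ _ _).neg
  rw [← pdir_dotProduct_mulVec h_symCurl, ← pdir_const_mul h_mn,
    ← pdir_add (h_mn.const_mul 2) h_div, ← pdir_const_mul h_m, ← pdir_sub h_cross (h_m.const_mul 2)]
  simp only [two_mul_dotProduct_msym_mcurl_add_mdiv_eq_pdir (hτ _) hsym hm hn hmn]

lemma tre3_neg (t : V3) (τ : V3 → M3) : tre3 (-t) τ = tre3 t τ := by
  ext x
  simp only [tre3, dotp_eq_dotProduct, mulVec_neg, neg_dotProduct, dotProduct_neg, neg_neg,
    pdir_neg_left, pdir_neg_right]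

lemma edge_trace_tr3cott_cross (hτ : ∀ y, DifferentiableMAt τ y)
    (hτ' : ∀ w, DifferentiableMAt (pdirM w τ) x) (hsym : ∀ y, (τ y).IsSymm)
    (hm : m ⬝ᵥ m = 1) (hn : n ⬝ᵥ n = 1) (hmn : m ⬝ᵥ n = 0) :
    m ⬝ᵥ tr3cott n τ x *ᵥ (n ⨯₃ m) =
      tre3 (n ⨯₃ m) τ x
        + 1 / 2 * pdir (n ⨯₃ m) (pdir (n ⨯₃ m) fun y =>
            n ⬝ᵥ τ y *ᵥ n + 2 * ((n ⨯₃ m) ⬝ᵥ tr1cott n τ y *ᵥ m)) x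
        - pdir (n ⨯₃ m) (pdir m fun y => (n ⨯₃ m) ⬝ᵥ tr1cott n τ y *ᵥ (n ⨯₃ m)) x := by
  rw [tr3cott, dotProduct_devf_mulVec hmn (cross_dot_self_left n m) (dot_cross_self n m),
    dotProduct_tr2inc_mulVec_cross (differentiableMAt_mcurl hτ').msym
      (fun y => msym_isSymm (mcurl τ y)) hmn]
  simp only [tre3, dotp_eq_dotProduct]
  linear_combination 1 / 2 *
    two_mul_dotProduct_pdirM_msym_mcurl_add_pdir_mdiv hτ hτ' hsym hm hn hmn (n ⨯₃ m)

end Traces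

theorem edge_trace_tr3cott_mt'_general (τ : V3 → M3) (hτ : ∀ y, DifferentiableMAt τ y)
    (hsym : ∀ y, (τ y)ᵀ = τ y) (t m n : V3)
    (ht : dotp t t = 1) (hm : dotp m m = 1) (hn : dotp n n = 1)
    (htm : dotp t m = 0) (htn : dotp t n = 0) (hmn : dotp m n = 0)
    (x : V3) (hτ' : ∀ w, DifferentiableMAt (pdirM w τ) x) :
    dotp m ((tr3cott n τ x).mulVec (cross n m)) =
      tre3 t τ x
        + (1 / 2 : ℝ) * pdir t (pdir t fun y =>
            dotp n ((τ y).mulVec n)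
              + 2 * dotp (cross n m) ((tr1cott n τ y).mulVec m)) x
        - pdir (cross n m)
            (fun y => pdir m (fun z => dotp t ((tr1cott n τ z).mulVec t)) y) x := by
  simp only [dotp_eq_dotProduct, cross_eq_crossProduct] at *
  have h_edge := edge_trace_tr3cott_cross hτ hτ' hsym hm hn hmn
  rcases eq_cross_or_eq_neg_cross ht hm hn htm htn hmn with rfl | rfl
  · exact h_edge
  · simpa only [tre3_neg, pdir_neg_left, pdir_neg_right, mulVec_neg, neg_dotProduct,
      dotProduct_neg, neg_neg] using h_edge

/-- edge trace identity
mᵀ(tr3cott τ)t' = tre3(τ) + (1/2)∂_t∂_t(nᵀτn + 2 t'ᵀ(tr1cott τ)m) − ∂_{t'}∂_m(tᵀ(tr1cott τ)t). -/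
theorem edge_trace_tr3cott_mt' (τ : V3 → M3) (hτ : SmoothM τ) (hsym : ∀ x, (τ x)ᵀ = τ x)
    (t m n : V3)
    (ht : dotp t t = 1) (hm : dotp m m = 1) (hn : dotp n n = 1)
    (htm : dotp t m = 0) (htn : dotp t n = 0) (hmn : dotp m n = 0) :
    ∀ x, dotp m ((tr3cott n τ x).mulVec (cross n m)) =
      tre3 t τ x
        + (1 / 2 : ℝ) * pdir t (pdir t fun y =>
            dotp n ((τ y).mulVec n)
              + 2 * dotp (cross n m) ((tr1cott n τ y).mulVec m)) x
        - pdir (cross n m)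
            (fun y => pdir m (fun z => dotp t ((tr1cott n τ z).mulVec t)) y) x :=
  fun x => edge_trace_tr3cott_mt'_general τ hτ.differentiableMAt hsym t m n ht hm hn htm htn hmn x
    fun w => (hτ.pdirM w).differentiableMAt x

end
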